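/- arXiv:math/0108094 — 5 statements merged into one kernel-verified Lean document; each statement's English description precedes it below -/
import Mathlib

section
/- For every j with 0 ≤ j ≤ n−2 one has D_1 · D_j = j·D_j + D_{j+1} in ℚ[S_n], and moreover D_1 · D_{n−1} = n·D_{n−1}. -/
/-- `D n j` is the element of the group algebra `ℚ[S_n]` given by the sum of all
permutations `ρ` of `{0,…,n-1}` (0-indexed version of `{1,…,n}`) that are strictly
increasing on the last `n - j` positions `{j,…,n-1}` (1-indexed: `{j+1,…,n}`).
In particular `D n 0 = 1`.  Under Bidigare's anti-isomorphism these are the images of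
the type `A_{n-1}` side-shuffle (random-to-top) elements `σ_j`. -/
noncomputable def D (n j : ℕ) : MonoidAlgebra ℚ (Equiv.Perm (Fin n)) :=
  ∑ ρ : Equiv.Perm (Fin n),
    if ∀ i i' : Fin n, j ≤ (i : ℕ) → i < i' → ρ i < ρ i'
    then MonoidAlgebra.of ℚ (Equiv.Perm (Fin n)) ρ else 0

def PP (n j : ℕ) (ρ : Equiv.Perm (Fin n)) : Prop :=
  ∀ i i' : Fin n, j ≤ (i : ℕ) → i < i' → ρ i < ρ i'

theorem cyc_lt {m : ℕ} (a x y : Fin (m+1)) (hx : x ≠ a) (hy : y ≠ a) :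
    Fin.cycleRange a x < Fin.cycleRange a y ↔ x < y := by
  obtain ⟨x, rfl⟩ := Fin.exists_succAbove_eq hx
  obtain ⟨y, rfl⟩ := Fin.exists_succAbove_eq hy
  simp [Fin.cycleRange_succAbove, Fin.succAbove_lt_succAbove_iff]

theorem key {m : ℕ} (j : ℕ) (π : Equiv.Perm (Fin (m+1))) (k : Fin (m+1)) (hj : j < m + 1) :
    PP (m+1) j (Fin.cycleRange (π k) * π) ↔
      ((k : ℕ) < j ∧ PP (m+1) j π) ∨ ((k : ℕ) = j ∧ PP (m+1) (j+1) π) := by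
  have e : ∀ i i', i ≠ k → i' ≠ k → ((Fin.cycleRange (π k) * π) i < (Fin.cycleRange (π k) * π) i' ↔ π i < π i') := by
    intro i i' h h'
    exact cyc_lt _ _ _ (by simpa using h) (by simpa using h')
  have e0 : (Fin.cycleRange (π k) * π) k = 0 := by simp [Fin.cycleRange_self]
  rcases lt_trichotomy (k : ℕ) j with h | h | h
  · have : ∀ i i' : Fin (m+1), j ≤ (i:ℕ) → i < i' → i ≠ k ∧ i' ≠ k := by
      intro i i' h1 h2
      constructor <;> (rintro rfl; omega)
    simp only [h, h.ne, true_and, false_and, or_false]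
    constructor
    · intro H i i' h1 h2
      exact (e i i' (this i i' h1 h2).1 (this i i' h1 h2).2).1 (H i i' h1 h2)
    · intro H i i' h1 h2
      exact (e i i' (this i i' h1 h2).1 (this i i' h1 h2).2).2 (H i i' h1 h2)
  · simp only [h, lt_irrefl, true_and, false_and, false_or]
    have : ∀ i i' : Fin (m+1), j+1 ≤ (i:ℕ) → i < i' → i ≠ k ∧ i' ≠ k := by
      intro i i' h1 h2
      constructor <;> (rintro rfl; omega)
    constructor
    · intro H i i' h1 h2
      exact (e i i' (this i i' h1 h2).1 (this i i' h1 h2).2).1 (H i i' (by omega) h2)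
    · intro H i i' h1 h2
      by_cases hi : i = k
      · subst hi
        rw [e0, Fin.pos_iff_ne_zero, ← e0]
        intro h3
        exact h2.ne' ((Fin.cycleRange (π i) * π).injective h3)
      · have h1' : j + 1 ≤ (i:ℕ) := by
          have : (i:ℕ) ≠ k := fun h => hi (Fin.ext h)
          omega
        exact (e i i' (this i i' h1' h2).1 (this i i' h1' h2).2).2 (H i i' h1' h2)
  · simp only [h.not_gt, h.ne', false_and, or_false, iff_false]
    intro H
    have := H ⟨j, hj⟩ k le_rfl h
    rw [e0] at this
    exact absurd this (Fin.not_lt_zero _)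

theorem PP_zero {n : ℕ} (ρ : Equiv.Perm (Fin n)) : PP n 0 ρ ↔ ρ = 1 := by
  constructor
  · intro h
    have hs : StrictMono ρ := fun i i' hi => h i i' (Nat.zero_le _) hi
    have : (ρ : Fin n → Fin n) = id :=
      (StrictMono.range_inj hs strictMono_id).1 (by simp)
    ext i
    simp [this]
  · rintro rfl i i' _ h
    simpa using h

theorem PP_one {m : ℕ} (ρ : Equiv.Perm (Fin (m+1))) :
    PP (m+1) 1 ρ ↔ ρ = (Fin.cycleRange (ρ 0))⁻¹ := by
  have := key 0 ρ 0 (Nat.succ_pos m)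
  rw [PP_zero, mul_eq_one_iff_inv_eq] at this
  simp only [Fin.val_zero, lt_irrefl, false_and, false_or, true_and, zero_add] at this
  rw [← this, eq_comm]

open Classical in
theorem D_eq (n j : ℕ) : D n j = ∑ ρ : Equiv.Perm (Fin n),
    if PP n j ρ then MonoidAlgebra.of ℚ (Equiv.Perm (Fin n)) ρ else 0 := by
  unfold D PP
  refine Finset.sum_congr rfl fun ρ _ => ?_
  congr

theorem D_one (m : ℕ) : D (m+1) 1 = ∑ a : Fin (m+1),
    MonoidAlgebra.of ℚ (Equiv.Perm (Fin (m+1))) (Fin.cycleRange a)⁻¹ := by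
  classical
  rw [D_eq, ← Finset.sum_filter]
  have h0 : ∀ a : Fin (m+1), (Fin.cycleRange a)⁻¹ 0 = a := by
    intro a
    rw [Equiv.Perm.inv_eq_iff_eq, Fin.cycleRange_self]
  refine Finset.sum_bij' (fun ρ _ => ρ 0) (fun a _ => (Fin.cycleRange a)⁻¹) ?_ ?_ ?_ ?_ ?_
  · simp
  · intro a _
    simp [PP_one, h0]
  · intro ρ h
    simp only [Finset.mem_filter, Finset.mem_univ, true_and, PP_one] at h
    exact h.symm
  · intro a _
    exact h0 a
  · intro ρ h
    simp only [Finset.mem_filter, Finset.mem_univ, true_and, PP_one] at h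
    exact congrArg _ h

theorem D_mul (m j : ℕ) (hj : j < m + 1) :
    D (m+1) 1 * D (m+1) j = (j : ℚ) • D (m+1) j + D (m+1) (j+1) := by
  classical
  rw [D_one, D_eq _ j, D_eq _ (j+1), Finset.sum_mul]
  have h1 : ∀ a : Fin (m+1), MonoidAlgebra.of ℚ (Equiv.Perm (Fin (m+1))) (Fin.cycleRange a)⁻¹ *
      (∑ ρ, if PP (m+1) j ρ then MonoidAlgebra.of ℚ (Equiv.Perm (Fin (m+1))) ρ else 0) =
      ∑ π, if PP (m+1) j (Fin.cycleRange a * π) then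
        MonoidAlgebra.of ℚ (Equiv.Perm (Fin (m+1))) π else 0 := by
    intro a
    rw [Finset.mul_sum]
    symm
    refine Fintype.sum_equiv (Equiv.mulLeft (Fin.cycleRange a)) _ _ fun π => ?_
    rw [mul_ite, mul_zero, ← map_mul]
    simp
  rw [Finset.sum_congr rfl fun a _ => h1 a, Finset.sum_comm, Finset.smul_sum,
    ← Finset.sum_add_distrib]
  refine Finset.sum_congr rfl fun π _ => ?_
  rw [← Equiv.sum_comp π]
  generalize MonoidAlgebra.of ℚ (Equiv.Perm (Fin (m+1))) π = x
  have h2 : ∀ k : Fin (m+1), (if PP (m+1) j (Fin.cycleRange (π k) * π) then x else 0) =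
      (if (k:ℕ) < j then (if PP (m+1) j π then x else 0) else 0) +
      (if k = ⟨j, hj⟩ then (if PP (m+1) (j+1) π then x else 0) else 0) := by
    intro k
    have hk : k = ⟨j, hj⟩ ↔ (k:ℕ) = j := by rw [Fin.ext_iff]
    simp only [key j π k hj, hk]
    rcases lt_trichotomy (k : ℕ) j with h | h | h
    · simp [h, h.ne]
    · simp [h]
    · simp [h.not_gt, h.ne']
  rw [Finset.sum_congr rfl fun k _ => h2 k, Finset.sum_add_distrib, Finset.sum_ite_eq',
    if_pos (Finset.mem_univ _), ← Finset.sum_filter, Finset.sum_const]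
  congr 1
  have hc : (Finset.univ.filter fun k : Fin (m+1) => (k:ℕ) < j).card = j := by
    have : (Finset.univ.filter fun k : Fin (m+1) => (k:ℕ) < j) = Finset.Iio (⟨j, hj⟩ : Fin (m+1)) := by
      ext k
      simp [Fin.lt_def]
    rw [this, Fin.card_Iio]
  rw [hc, Nat.cast_smul_eq_nsmul]

theorem D_top (m : ℕ) : D (m+1) (m+1) = D (m+1) m := by
  classical
  rw [D_eq, D_eq]
  refine Finset.sum_congr rfl fun ρ _ => ?_
  have h1 : PP (m+1) (m+1) ρ := fun i i' h _ => by omega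
  have h2 : PP (m+1) m ρ := fun i i' h h' => by omega
  rw [if_pos h1, if_pos h2]

/-- For `0 ≤ j ≤ n-2`, `D_1 · D_j = j·D_j + D_{j+1}`, and `D_1 · D_{n-1} = n·D_{n-1}`. -/
theorem stmt_1 (n : ℕ) (hn : 2 ≤ n) :
    (∀ j : ℕ, j ≤ n - 2 →
      D n 1 * D n j = (j : ℚ) • D n j + D n (j + 1)) ∧
    D n 1 * D n (n - 1) = (n : ℚ) • D n (n - 1) := by
  obtain ⟨m, rfl⟩ : ∃ m, n = m + 1 := ⟨n - 1, by omega⟩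
  refine ⟨fun j hj => D_mul m j (by omega), ?_⟩
  rw [Nat.add_sub_cancel, D_mul m m (by omega), D_top]
  push_cast
  rw [add_smul, one_smul]
end

section
/- The two-sided shuffle element E_1 satisfies the polynomial relation E_1·(E_1 − 2)·(E_1 − 4)···(E_1 − (2n−4))·(E_1 − 2n) = 0 in ℚ[S_n]; that is, the product over the factors (E_1 − 2m) for m ∈ {0,1,…,n−2,n} vanishes (note the factor (E_1 − (2n−2)) is absent). -/
/-- `E1 n` is the two-sided shuffle element of `ℚ[S_n]`: the sum of all permutations
`ρ` of `{0,…,n-1}` (0-indexed version of `{1,…,n}`) that are strictly increasing on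
`{1,…,n-1}` (1-indexed: `{2,…,n}`), plus the sum of all permutations strictly
increasing on `{0,…,n-2}` (1-indexed: `{1,…,n−1}`). -/
noncomputable def E1 (n : ℕ) : MonoidAlgebra ℚ (Equiv.Perm (Fin n)) :=
  (∑ ρ : Equiv.Perm (Fin n),
    if ∀ i i' : Fin n, 1 ≤ (i : ℕ) → i < i' → ρ i < ρ i'
    then MonoidAlgebra.of ℚ (Equiv.Perm (Fin n)) ρ else 0) +
  (∑ ρ : Equiv.Perm (Fin n),
    if ∀ i i' : Fin n, (i' : ℕ) + 1 ≤ n - 1 → i < i' → ρ i < ρ i'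
    then MonoidAlgebra.of ℚ (Equiv.Perm (Fin n)) ρ else 0)

open Equiv in
/-- moves `a` to `p`, keeping the rest in order -/
def mv {N : ℕ} (p a : Fin (N+1)) : Perm (Fin (N+1)) := p.cycleRange.symm * a.cycleRange

theorem mv_self {N : ℕ} (p a : Fin (N+1)) : mv p a a = p := by simp [mv]

theorem mv_succAbove {N : ℕ} (p a : Fin (N+1)) (j : Fin N) :
    mv p a (a.succAbove j) = p.succAbove j := by simp [mv]

theorem mv_inv {N : ℕ} (p a : Fin (N+1)) : (mv p a)⁻¹ = mv a p := by
  simp [mv, ← Equiv.Perm.inv_def]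

theorem mv_lt {N : ℕ} (p a x y : Fin (N+1)) (hx : x ≠ a) (hy : y ≠ a) :
    mv p a x < mv p a y ↔ x < y := by
  obtain ⟨i, rfl⟩ := Fin.exists_succAbove_eq hx
  obtain ⟨j, rfl⟩ := Fin.exists_succAbove_eq hy
  simp [mv_succAbove, Fin.succAbove_lt_succAbove_iff]

theorem mv_unique {N : ℕ} (p : Fin (N+1)) (ρ : Equiv.Perm (Fin (N+1)))
    (h : StrictMono (ρ ∘ p.succAbove)) : mv (ρ p) p = ρ := by
  have h2 : ρ ∘ p.succAbove = (ρ p).succAbove := by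
    rw [← h.range_inj (Fin.strictMono_succAbove _), Set.range_comp, Fin.range_succAbove,
      Fin.range_succAbove, Set.image_compl_eq ρ.bijective, Set.image_singleton]
  ext1 x
  by_cases hx : x = p
  · subst hx; rw [mv_self]
  · obtain ⟨j, rfl⟩ := Fin.exists_succAbove_eq hx
    rw [mv_succAbove]; exact (congrFun h2 j).symm

open Classical in
theorem sum_mv {N : ℕ} (p : Fin (N+1)) (P : Equiv.Perm (Fin (N+1)) → Prop) [DecidablePred P]
    (hP : ∀ ρ, P ρ ↔ StrictMono (ρ ∘ p.succAbove)) :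
    (∑ ρ : Equiv.Perm (Fin (N+1)),
      if P ρ then MonoidAlgebra.of ℚ (Equiv.Perm (Fin (N+1))) ρ else 0)
      = ∑ a, MonoidAlgebra.of ℚ (Equiv.Perm (Fin (N+1))) (mv a p) := by
  rw [← Finset.sum_filter]
  refine Finset.sum_nbij' (fun ρ => ρ p) (fun a => mv a p) ?_ ?_ ?_ ?_ ?_
  · simp
  · intro a _
    simp only [Finset.mem_filter, Finset.mem_univ, true_and, hP]
    intro i j hij
    simpa [mv_succAbove, Fin.succAbove_lt_succAbove_iff] using hij
  · intro ρ hρ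
    simp only [Finset.mem_filter, Finset.mem_univ, true_and, hP] at hρ
    exact mv_unique p ρ hρ
  · intro a _; exact mv_self a p
  · intro ρ hρ
    simp only [Finset.mem_filter, Finset.mem_univ, true_and, hP] at hρ
    rw [mv_unique p ρ hρ]

theorem E1_eq (N : ℕ) : E1 (N+1) =
    ∑ a, MonoidAlgebra.of ℚ (Equiv.Perm (Fin (N+1))) (mv a 0) +
    ∑ a, MonoidAlgebra.of ℚ (Equiv.Perm (Fin (N+1))) (mv a (Fin.last N)) := by
  unfold E1
  congr 1
  · apply sum_mv
    intro ρ
    constructor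
    · intro h i j hij
      simp only [Function.comp, Fin.succAbove_zero]
      exact h _ _ (by simp) (by simpa using hij)
    · intro h i j hi hij
      have hi0 : i ≠ 0 := by rintro rfl; simp at hi
      have hj0 : j ≠ 0 := by rintro rfl; simp at hij
      obtain ⟨i, rfl⟩ := Fin.exists_succ_eq.2 hi0
      obtain ⟨j, rfl⟩ := Fin.exists_succ_eq.2 hj0
      simpa using h (by simpa using hij : i < j)
  · apply sum_mv
    intro ρ
    constructor
    · intro h i j hij
      simp only [Function.comp, Fin.succAbove_last]
      exact h _ _ (by simp) (by simpa using hij)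
    · intro h i j hj hij
      have hj0 : j ≠ Fin.last N := by rintro rfl; simp at hj
      have hi0 : i ≠ Fin.last N := by rintro rfl; exact absurd hij (Fin.le_last _).not_gt
      obtain ⟨i, rfl⟩ := Fin.exists_castSucc_eq.2 hi0
      obtain ⟨j, rfl⟩ := Fin.exists_castSucc_eq.2 hj0
      simpa using h (by simpa using hij : i < j)

/-- move card `c` to position `p` -/
def act {N : ℕ} (p c : Fin (N+1)) (u : Equiv.Perm (Fin (N+1))) : Equiv.Perm (Fin (N+1)) :=
  mv p (u c) * u

theorem act_self {N : ℕ} (p c : Fin (N+1)) (u : Equiv.Perm (Fin (N+1))) : act p c u c = p := by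
  simp [act, mv_self]

theorem act_lt {N : ℕ} (p c : Fin (N+1)) (u : Equiv.Perm (Fin (N+1))) (x y : Fin (N+1))
    (hx : x ≠ c) (hy : y ≠ c) : act p c u x < act p c u y ↔ u x < u y := by
  simp only [act, Equiv.Perm.mul_apply]
  exact mv_lt _ _ _ _ (by simpa using hx) (by simpa using hy)

theorem E1_mul_coeff {N : ℕ} (φ : MonoidAlgebra ℚ (Equiv.Perm (Fin (N+1))))
    (u : Equiv.Perm (Fin (N+1))) :
    (E1 (N+1) * φ).coeff u =
      ∑ c, (φ.coeff (act 0 c u) + φ.coeff (act (Fin.last N) c u)) := by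
  rw [E1_eq, Finset.sum_add_distrib]
  have key : ∀ p : Fin (N+1),
      ((∑ a, MonoidAlgebra.of ℚ (Equiv.Perm (Fin (N+1))) (mv a p)) * φ).coeff u
        = ∑ c, φ.coeff (act p c u) := by
    intro p
    rw [Finset.sum_mul, MonoidAlgebra.coeff_sum, Finset.sum_apply']
    simp only [act]
    rw [Equiv.sum_comp u (fun a => φ.coeff (mv p a * u))]
    refine Finset.sum_congr rfl fun a _ => ?_
    rw [MonoidAlgebra.of_apply, MonoidAlgebra.coeff_single_mul_apply, mv_inv, one_mul]
  rw [add_mul, MonoidAlgebra.coeff_add, Finsupp.add_apply, key, key]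

/-- same relative order outside `S` -/
def Sim {N : ℕ} (S : Finset (Fin (N+1))) (u v : Equiv.Perm (Fin (N+1))) : Prop :=
  ∀ a b, a ∉ S → b ∉ S → (u a < u b ↔ v a < v b)

def InJ {N : ℕ} (S : Finset (Fin (N+1))) (φ : MonoidAlgebra ℚ (Equiv.Perm (Fin (N+1)))) : Prop :=
  ∀ u v, Sim S u v → φ.coeff u = φ.coeff v

theorem sim_act {N : ℕ} {S : Finset (Fin (N+1))} (p c : Fin (N+1)) (hc : c ∈ S)
    (u : Equiv.Perm (Fin (N+1))) : Sim S (act p c u) u := by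
  intro a b ha hb
  exact act_lt _ _ _ _ _ (by rintro rfl; exact ha hc) (by rintro rfl; exact hb hc)

theorem sim_act_insert {N : ℕ} {S : Finset (Fin (N+1))} (p c : Fin (N+1))
    (hp : p = 0 ∨ p = Fin.last N) (u v : Equiv.Perm (Fin (N+1))) (h : Sim (insert c S) u v) :
    Sim S (act p c u) (act p c v) := by
  intro a b ha hb
  have ne : ∀ (w : Equiv.Perm (Fin (N+1))) x, x ≠ c → act p c w x ≠ p := by
    intro w x hx h
    rw [← act_self p c w] at h
    simp only [act_self] at h
    exact hx ((act p c w).injective (h.trans (act_self p c w).symm))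
  by_cases hac : a = c
  · by_cases hbc : b = c
    · subst hac; subst hbc; simp
    · subst hac
      rw [act_self, act_self]
      have h1 := ne u b hbc
      have h2 := ne v b hbc
      rcases hp with rfl | rfl
      · exact iff_of_true (Fin.pos_iff_ne_zero.2 h1) (Fin.pos_iff_ne_zero.2 h2)
      · exact iff_of_false (Fin.le_last _).not_gt (Fin.le_last _).not_gt
  · by_cases hbc : b = c
    · subst hbc
      rw [act_self, act_self]
      have h1 := ne u a hac
      have h2 := ne v a hac
      rcases hp with rfl | rfl
      · exact iff_of_false (Fin.zero_le _).not_gt (Fin.zero_le _).not_gt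
      · exact iff_of_true (Fin.lt_last_iff_ne_last.2 h1) (Fin.lt_last_iff_ne_last.2 h2)
    · rw [act_lt _ _ _ _ _ hac hbc, act_lt _ _ _ _ _ hac hbc]
      exact h a b (by simp [hac, ha]) (by simp [hbc, hb])

theorem sim_of_card {N : ℕ} {S : Finset (Fin (N+1))} (hS : S.card = N)
    (u v : Equiv.Perm (Fin (N+1))) : Sim S u v := by
  intro a b ha hb
  have hc : Sᶜ.card ≤ 1 := by rw [Finset.card_compl, hS]; simp
  have := Finset.card_le_one.1 hc a (by simpa) b (by simpa)
  subst this; simp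

theorem eq_of_sim {N : ℕ} (u v : Equiv.Perm (Fin (N+1))) (h : Sim ∅ u v) : u = v := by
  have hm : StrictMono (v * u⁻¹) := by
    intro a b hab
    have := (h (u⁻¹ a) (u⁻¹ b) (by simp) (by simp)).1 (by simpa using hab)
    simpa using this
  have : (⇑(v * u⁻¹)) = id := by
    rw [← hm.range_inj strictMono_id]
    rw [(v * u⁻¹).surjective.range_eq]; simp
  have h2 : v * u⁻¹ = 1 := by ext1 x; rw [this]; rfl
  exact (mul_inv_eq_one.1 h2).symm

theorem natCast_mul_coeff {N : ℕ} (k : ℕ) (φ : MonoidAlgebra ℚ (Equiv.Perm (Fin (N+1))))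
    (u : Equiv.Perm (Fin (N+1))) :
    ((k : MonoidAlgebra ℚ (Equiv.Perm (Fin (N+1)))) * φ).coeff u = k * φ.coeff u := by
  rw [← nsmul_eq_mul]
  induction k with
  | zero => simp
  | succ k ih => rw [succ_nsmul, MonoidAlgebra.coeff_add, Finsupp.add_apply, ih]; push_cast; ring

theorem main_ind {N : ℕ} (j : ℕ) : ∀ (k : ℕ), k + j = N → ∀ (S : Finset (Fin (N+1))), S.card = k →
    ∀ φ, InJ S φ →
    ((List.range' k j).map
      (fun m => E1 (N+1) - ((2 * m : ℕ) : MonoidAlgebra ℚ (Equiv.Perm (Fin (N+1)))))).prod *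
      (E1 (N+1) - ((2 * (N+1) : ℕ) : MonoidAlgebra ℚ (Equiv.Perm (Fin (N+1))))) * φ = 0 := by
  induction j with
  | zero =>
    intro k hk S hS φ hφ
    simp only [List.range'_zero, List.map_nil, List.prod_nil, one_mul]
    ext u
    rw [sub_mul, MonoidAlgebra.coeff_sub, Finsupp.sub_apply, E1_mul_coeff, natCast_mul_coeff]
    have : ∀ v, φ.coeff v = φ.coeff u := fun v => hφ _ _ (sim_of_card (by omega) _ _)
    rw [Finset.sum_congr rfl (fun c _ => by rw [this (act 0 c u), this (act (Fin.last N) c u)])]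
    simp
    ring
  | succ j ih =>
    intro k hk S hS φ hφ
    rw [List.range'_succ, List.map_cons, List.prod_cons]
    set x := E1 (N+1) - ((2 * k : ℕ) : MonoidAlgebra ℚ (Equiv.Perm (Fin (N+1)))) with hx
    set f := (fun m : ℕ => E1 (N+1) - ((2 * m : ℕ) : MonoidAlgebra ℚ (Equiv.Perm (Fin (N+1))))) with hf
    have comm : ∀ m, Commute x (f m) := by
      intro m
      exact Commute.sub_left (Commute.sub_right (Commute.refl _) (Nat.commute_cast _ _))
        (Nat.cast_commute _ _)
    have c1 : Commute x ((List.range' (k+1) j).map f).prod := by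
      apply Commute.list_prod_right
      intro y hy
      obtain ⟨m, _, rfl⟩ := List.mem_map.1 hy
      exact comm m
    have c2 := c1.mul_right (comm (N+1))
    rw [mul_assoc x, c2.eq, mul_assoc]
    let ψ : Fin (N+1) → MonoidAlgebra ℚ (Equiv.Perm (Fin (N+1))) := fun c =>
      MonoidAlgebra.ofCoeff (Finsupp.equivFunOnFinite.symm
        (fun u => φ.coeff (act 0 c u) + φ.coeff (act (Fin.last N) c u)))
    have hxφ : x * φ = ∑ c ∈ Sᶜ, ψ c := by
      ext u
      rw [hx, sub_mul, MonoidAlgebra.coeff_sub, Finsupp.sub_apply, E1_mul_coeff, natCast_mul_coeff,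
        MonoidAlgebra.coeff_sum, Finset.sum_apply', ← Finset.sum_add_sum_compl S]
      have : ∑ c ∈ S, (φ.coeff (act 0 c u) + φ.coeff (act (Fin.last N) c u)) =
          ((2 * k : ℕ) : ℚ) * φ.coeff u := by
        rw [Finset.sum_congr rfl (fun c hc => by
          rw [hφ _ _ (sim_act 0 c hc u), hφ _ _ (sim_act (Fin.last N) c hc u)])]
        simp [hS]
        ring
      rw [this, add_sub_cancel_left]
      rfl
    rw [hxφ, Finset.mul_sum]
    refine Finset.sum_eq_zero fun c hc => ?_
    refine ih (k+1) (by omega) (insert c S) ?_ (ψ c) ?_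
    · rw [Finset.card_insert_of_notMem (by simpa using hc), hS]
    · intro u v huv
      change φ.coeff (act 0 c u) + φ.coeff (act (Fin.last N) c u) =
        φ.coeff (act 0 c v) + φ.coeff (act (Fin.last N) c v)
      rw [hφ _ _ (sim_act_insert 0 c (Or.inl rfl) u v huv),
        hφ _ _ (sim_act_insert (Fin.last N) c (Or.inr rfl) u v huv)]

/-- The two-sided shuffle element satisfies
`E_1·(E_1 − 2)·(E_1 − 4)···(E_1 − (2n−4))·(E_1 − 2n) = 0` in `ℚ[S_n]`
(the factor `(E_1 − (2n−2))` is absent). -/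
theorem stmt_8 (n : ℕ) (hn : 2 ≤ n) :
    ((List.range (n - 1)).map
      (fun m => E1 n - ((2 * m : ℕ) : MonoidAlgebra ℚ (Equiv.Perm (Fin n))))).prod *
      (E1 n - ((2 * n : ℕ) : MonoidAlgebra ℚ (Equiv.Perm (Fin n)))) = 0 := by
  obtain ⟨N, rfl⟩ : ∃ N, n = N + 1 := ⟨n - 1, by omega⟩
  have := main_ind (N := N) N 0 (by omega) ∅ rfl 1
    (fun u v h => by rw [eq_of_sim u v h])
  rw [mul_one, ← List.range_eq_range'] at this
  exact this
end

section
/- For all integers a, b ≥ 1 one has R_a · R_b = R_{ab} in ℚ[S_n]. -/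
/-- The number of descents of a permutation `ρ` of `{0,…,n-1}` (0-indexed version of
`{1,…,n}`): the number of positions `i` with `ρ(i) > ρ(i+1)`, counted as the number of
pairs of consecutive positions `(p₁, p₂)` with `ρ p₂ < ρ p₁`. -/
def des {n : ℕ} (ρ : Equiv.Perm (Fin n)) : ℕ :=
  (Finset.univ.filter
    (fun p : Fin n × Fin n => (p.1 : ℕ) + 1 = (p.2 : ℕ) ∧ ρ p.2 < ρ p.1)).card

/-- The inverse `a`-shuffle element
`R_a := Σ_{ρ ∈ S_n} C(n + a − 1 − des(ρ), n)·ρ ∈ ℚ[S_n]` (with `C(m,n) = 0` for `m < n`). -/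
noncomputable def R (n a : ℕ) : MonoidAlgebra ℚ (Equiv.Perm (Fin n)) :=
  ∑ ρ : Equiv.Perm (Fin n),
    (((n + a - 1 - des ρ).choose n : ℕ) : ℚ) • MonoidAlgebra.of ℚ (Equiv.Perm (Fin n)) ρ

lemma sort_eq_iff_lex {n a : ℕ} (f : Fin n → Fin a) (ρ : Equiv.Perm (Fin n)) :
    Tuple.sort f = ρ ↔ StrictMono (fun i => toLex (f (ρ i), ρ i)) := by
  rw [eq_comm, Tuple.eq_sort_iff]
  constructor
  · rintro ⟨h1, h2⟩ i j hij
    rw [Prod.Lex.toLex_lt_toLex]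
    rcases (h1 hij.le).lt_or_eq with h | h
    · exact Or.inl h
    · exact Or.inr ⟨h, h2 i j hij h⟩
  · intro h
    refine ⟨?_, ?_⟩
    · intro i j hij
      rcases hij.lt_or_eq with h' | h'
      · have := h h'
        rw [Prod.Lex.toLex_lt_toLex] at this
        rcases this with h3 | h3
        · exact h3.le
        · exact h3.1.le
      · rw [h']
    · intro i j hij he
      have := h hij
      rw [Prod.Lex.toLex_lt_toLex] at this
      rcases this with h3 | h3
      · exact absurd he h3.ne
      · exact h3.2

open Classical in
noncomputable def ascE {m : ℕ} (ρ : Equiv.Perm (Fin (m+1))) (k : ℕ) : ℕ :=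
  ∑ i ∈ Finset.range k, if ∃ h : i < m, ρ (Fin.castSucc ⟨i, h⟩) < ρ (Fin.succ ⟨i, h⟩) then 1 else 0

lemma ascE_succ {m : ℕ} (ρ : Equiv.Perm (Fin (m+1))) (k : Fin m) :
    ascE ρ (k + 1) = ascE ρ k + if ρ k.castSucc < ρ k.succ then 1 else 0 := by
  unfold ascE
  rw [Finset.sum_range_succ]
  simp

lemma ascE_le {m : ℕ} (ρ : Equiv.Perm (Fin (m+1))) (k : ℕ) :
    ascE ρ k ≤ ascE ρ (k+1) ∧ ascE ρ (k + 1) ≤ ascE ρ k + 1 := by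
  unfold ascE
  rw [Finset.sum_range_succ]
  split_ifs <;> simp

lemma des_eq {m : ℕ} (ρ : Equiv.Perm (Fin (m+1))) :
    des ρ = ∑ k : Fin m, if ρ k.succ < ρ k.castSucc then 1 else 0 := by
  rw [← Finset.card_filter]
  unfold des
  symm
  refine Finset.card_bij (fun k _ => (k.castSucc, k.succ)) ?_ ?_ ?_
  · intro k hk
    simpa using hk
  · intro k _ l _ h
    simpa using h
  · rintro ⟨p, q⟩ h
    simp only [Finset.mem_filter, Finset.mem_univ, true_and] at h
    obtain ⟨h1, h2⟩ := h
    have hp : (p : ℕ) < m := by omega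
    have e1 : p = Fin.castSucc ⟨p, hp⟩ := by ext; simp
    have e2 : q = Fin.succ ⟨p, hp⟩ := by ext; simp [← h1]
    refine ⟨⟨p, hp⟩, ?_, ?_⟩
    · simp only [Finset.mem_filter, Finset.mem_univ, true_and]
      rw [← e1, ← e2]; exact h2
    · rw [← e1, ← e2]

lemma ascE_add_des {m : ℕ} (ρ : Equiv.Perm (Fin (m+1))) : ascE ρ m + des ρ = m := by
  classical
  rw [des_eq]
  unfold ascE
  rw [Finset.sum_range, ← Finset.sum_add_distrib]
  have : ∀ k : Fin m, ((if ∃ h : (k:ℕ) < m, ρ (Fin.castSucc ⟨k, h⟩) < ρ (Fin.succ ⟨k, h⟩) then 1 else 0)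
      + if ρ k.succ < ρ k.castSucc then 1 else 0) = 1 := by
    intro k
    have hne : ρ k.castSucc ≠ ρ k.succ := fun h => by
      have := ρ.injective h
      exact absurd this (Fin.castSucc_lt_succ).ne
    rcases lt_or_gt_of_ne hne with h | h
    · simp [h, h.le]
    · simp [h, h.le]
  rw [Finset.sum_congr rfl (fun k _ => this k)]
  simp

lemma lex_iff {m a : ℕ} (ρ : Equiv.Perm (Fin (m+1))) (c : Fin (m+1) → Fin a) :
    StrictMono (fun i => toLex (c i, ρ i)) ↔ StrictMono (fun i => (c i : ℕ) + ascE ρ i) := by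
  rw [Fin.strictMono_iff_lt_succ, Fin.strictMono_iff_lt_succ]
  refine forall_congr' fun k => ?_
  rw [Prod.Lex.toLex_lt_toLex]
  simp only [Fin.val_succ, Fin.val_castSucc, ascE_succ, Fin.lt_def, Fin.ext_iff]
  split_ifs with h <;> omega

lemma count {m a : ℕ} (E : ℕ → ℕ) (h0 : E 0 = 0) (hE : ∀ k, E k ≤ E (k+1) ∧ E (k+1) ≤ E k + 1) :
    (Finset.univ.filter (fun c : Fin (m+1) → Fin a =>
      StrictMono (fun i => (c i : ℕ) + E i))).card = (a + E m).choose (m+1) := by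
  have hmono : Monotone E := monotone_nat_of_le_succ fun k => (hE k).1
  have hlip : ∀ i d, E (i + d) ≤ E i + d := by
    intro i d
    induction d with
    | zero => simp
    | succ d ih => have := (hE (i+d)).2; rw [← add_assoc]; omega
  rw [← Finset.card_range (a + E m), ← Finset.card_powersetCard]
  refine Finset.card_bij (fun c _ => Finset.univ.image (fun i => (c i : ℕ) + E i)) ?_ ?_ ?_
  · intro c hc
    simp only [Finset.mem_filter, Finset.mem_univ, true_and] at hc
    rw [Finset.mem_powersetCard]
    refine ⟨?_, ?_⟩
    · intro x hx
      simp only [Finset.mem_image, Finset.mem_univ, true_and] at hx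
      obtain ⟨i, rfl⟩ := hx
      have := hmono (show (i:ℕ) ≤ m by omega)
      have := (c i).2
      simp only [Finset.mem_range]; omega
    · rw [Finset.card_image_of_injective _ hc.injective]; simp
  · intro c hc d hd h
    simp only [Finset.mem_filter, Finset.mem_univ, true_and] at hc hd
    have h' : Set.range (fun i => (c i : ℕ) + E i) = Set.range (fun i => (d i : ℕ) + E i) := by
      have := congrArg (fun s : Finset ℕ => (s : Set ℕ)) h
      simpa using this
    have := (hc.range_inj hd).1 h'
    funext i
    have := congrFun this i
    ext
    simpa using this
  · intro s hs
    rw [Finset.mem_powersetCard] at hs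
    obtain ⟨hs, hcard⟩ := hs
    set d := s.orderEmbOfFin hcard with hd
    have hdm : StrictMono d := d.strictMono
    have hgap : ∀ k (i : Fin (m+1)) (h : (i:ℕ) + k < m + 1), d i + k ≤ d ⟨i + k, h⟩ := by
      intro k i
      induction k with
      | zero => intro h; simp
      | succ k ih =>
        intro h
        have h1 := ih (by omega)
        have h2 : d ⟨i + k, by omega⟩ < d ⟨i + (k+1), h⟩ := hdm (by simp [Fin.lt_def])
        omega
    have hlow : ∀ i : Fin (m+1), E i ≤ d i := by
      intro i
      have h1 := hgap i 0 (by simp; omega)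
      have h2 := hlip 0 i
      have h3 : (⟨((0 : Fin (m+1)) : ℕ) + i, by simp; omega⟩ : Fin (m+1)) = i := by ext; simp
      rw [h3] at h1
      simp only [zero_add, h0] at h2
      omega
    have hup : ∀ i : Fin (m+1), d i - E i < a := by
      intro i
      have h1 := hgap (m - i) i (by omega)
      have h2 := hlip i (m - i)
      have h3 : d ⟨i + (m - i), by omega⟩ ∈ Finset.range (a + E m) := by
        have := hs (s.orderEmbOfFin_mem hcard ⟨i + (m - i), by omega⟩)
        simpa using this
      rw [Finset.mem_range] at h3
      have e : (i:ℕ) + (m - i) = m := by omega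
      rw [e] at h2
      have := hlow i
      omega
    have key : (fun i => (((⟨d i - E i, hup i⟩ : Fin a)) : ℕ) + E i) = d := by
      funext i
      have := hlow i
      simp only
      omega
    refine ⟨fun i => ⟨d i - E i, hup i⟩, ?_, ?_⟩
    · simp only [Finset.mem_filter, Finset.mem_univ, true_and]
      rw [key]; exact hdm
    · simp only [key]
      exact s.image_orderEmbOfFin_univ hcard

lemma card_sort {m a : ℕ} (ha : 1 ≤ a) (ρ : Equiv.Perm (Fin (m+1))) :
    (Finset.univ.filter (fun f : Fin (m+1) → Fin a => Tuple.sort f = ρ)).card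
      = (m + 1 + a - 1 - des ρ).choose (m+1) := by
  have h := ascE_add_des ρ
  have e : m + 1 + a - 1 - des ρ = a + ascE ρ m := by omega
  rw [e, ← count (ascE ρ) (by simp [ascE]) (ascE_le ρ)]
  refine Finset.card_bij (fun f _ => f ∘ ρ) ?_ ?_ ?_
  · intro f hf
    simp only [Finset.mem_filter, Finset.mem_univ, true_and] at hf ⊢
    rw [sort_eq_iff_lex] at hf
    exact (lex_iff ρ (f ∘ ρ)).1 hf
  · intro f _ g _ hfg
    exact ρ.surjective.injective_comp_right hfg
  · intro c hc
    simp only [Finset.mem_filter, Finset.mem_univ, true_and] at hc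
    refine ⟨c ∘ ρ.symm, ?_, ?_⟩
    · simp only [Finset.mem_filter, Finset.mem_univ, true_and]
      rw [sort_eq_iff_lex]
      simpa using (lex_iff ρ c).2 hc
    · funext i; simp

lemma R_eq {n a : ℕ} (hn : 1 ≤ n) (ha : 1 ≤ a) :
    R n a = ∑ f : Fin n → Fin a, MonoidAlgebra.of ℚ (Equiv.Perm (Fin n)) (Tuple.sort f) := by
  obtain ⟨m, rfl⟩ : ∃ m, n = m + 1 := ⟨n - 1, by omega⟩
  unfold R
  rw [← Finset.sum_fiberwise_of_maps_to (s := Finset.univ) (t := Finset.univ)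
    (g := fun f : Fin (m+1) → Fin a => Tuple.sort f) (fun _ _ => Finset.mem_univ _)]
  refine Finset.sum_congr rfl fun ρ _ => ?_
  rw [← card_sort ha ρ, Finset.sum_congr rfl (g := fun _ => MonoidAlgebra.of ℚ _ ρ)]
  · rw [Finset.sum_const, Nat.cast_smul_eq_nsmul]
  · intro f hf
    simp only [Finset.mem_filter, Finset.mem_univ, true_and] at hf
    rw [hf]

lemma finProd_lt {a b : ℕ} (x y : Fin b) (u v : Fin a) :
    finProdFinEquiv (x, u) < finProdFinEquiv (y, v) ↔ x < y ∨ (x = y ∧ u < v) := by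
  have hu := u.2
  have hv := v.2
  simp only [Fin.lt_def, finProdFinEquiv_apply_val, Fin.ext_iff]
  rcases lt_trichotomy (x:ℕ) y with h | h | h
  · have : a * (x + 1) ≤ a * y := Nat.mul_le_mul_left _ h
    rw [mul_add] at this
    constructor
    · intro; exact Or.inl h
    · intro; omega
  · rw [h]; simp
  · have : a * (y + 1) ≤ a * x := Nat.mul_le_mul_left _ h
    rw [mul_add] at this
    constructor
    · intro; omega
    · intro; omega

/-- the combined labeling -/
def comb {n a b : ℕ} (p : (Fin n → Fin a) × (Fin n → Fin b)) : Fin n → Fin (b * a) :=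
  fun x => finProdFinEquiv (p.2 ((Tuple.sort p.1).symm x), p.1 x)

lemma comb_bij {n a b : ℕ} : Function.Bijective (comb (n := n) (a := a) (b := b)) := by
  constructor
  · rintro ⟨f, g⟩ ⟨f', g'⟩ h
    have h1 : ∀ x, g ((Tuple.sort f).symm x) = g' ((Tuple.sort f').symm x) ∧ f x = f' x := by
      intro x
      have := finProdFinEquiv.injective (congrFun h x)
      simpa using this
    have e : f = f' := funext fun x => (h1 x).2
    subst e
    have e2 : g = g' := funext fun x => by simpa using (h1 (Tuple.sort f x)).1
    rw [e2]
  · intro h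
    refine ⟨(fun x => (finProdFinEquiv.symm (h x)).2, fun x =>
      (finProdFinEquiv.symm (h (Tuple.sort (fun x => (finProdFinEquiv.symm (h x)).2) x))).1), ?_⟩
    funext x
    unfold comb
    simp only [Equiv.apply_symm_apply, Prod.mk.eta]

lemma comb_sort {n a b : ℕ} (p : (Fin n → Fin a) × (Fin n → Fin b)) :
    Tuple.sort (comb p) = Tuple.sort p.1 * Tuple.sort p.2 := by
  obtain ⟨f, g⟩ := p
  have hf := (sort_eq_iff_lex f _).1 rfl
  have hg := (sort_eq_iff_lex g _).1 rfl
  rw [sort_eq_iff_lex]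
  intro i j hij
  have h1 := hg hij
  simp only [Prod.Lex.toLex_lt_toLex] at h1 ⊢
  simp only [comb, finProd_lt, Equiv.Perm.mul_apply, Equiv.symm_apply_apply,
    EmbeddingLike.apply_eq_iff_eq, Prod.mk.injEq]
  rcases h1 with h1 | ⟨h1, h2⟩
  · exact Or.inl (Or.inl h1)
  · have h3 := hf h2
    simp only [Prod.Lex.toLex_lt_toLex] at h3
    rcases h3 with h3 | ⟨h3, h4⟩
    · exact Or.inl (Or.inr ⟨h1, h3⟩)
    · exact Or.inr ⟨⟨h1, h3⟩, h4⟩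

/-- Multiplicativity of the inverse `a`-shuffles: `R_a · R_b = R_{ab}` in `ℚ[S_n]`. -/
theorem stmt_9 (n : ℕ) (hn : 1 ≤ n) (a b : ℕ) (ha : 1 ≤ a) (hb : 1 ≤ b) :
    R n a * R n b = R n (a * b) := by
  rw [mul_comm a b, R_eq hn ha, R_eq hn hb, R_eq hn (Nat.mul_pos hb ha), Finset.sum_mul_sum,
    ← Fintype.sum_prod_type', ← comb_bij.sum_comp]
  refine Finset.sum_congr rfl fun p _ => ?_
  rw [comb_sort, map_mul]
end

section
/- For every integer a ≥ 1 the inverse a-shuffle element satisfies (R_a − a)·(R_a − a²)·(R_a − a³)···(R_a − a^n) = 0 in ℚ[S_n], where an integer m denotes the scalar m times the identity of the group algebra. -/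
def asc {N : ℕ} (ρ : Equiv.Perm (Fin (N+1))) (i : Fin (N+1)) : ℕ :=
  (Finset.univ.filter (fun j : Fin N => j.castSucc < i ∧ ρ j.castSucc < ρ j.succ)).card

theorem asc_mono {N : ℕ} (ρ : Equiv.Perm (Fin (N+1))) : Monotone (asc ρ) := by
  intro i k h
  apply Finset.card_le_card
  intro j
  simp only [Finset.mem_filter, Finset.mem_univ, true_and]
  rintro ⟨h1, h2⟩
  exact ⟨lt_of_lt_of_le h1 h, h2⟩

theorem asc_succ {N : ℕ} (ρ : Equiv.Perm (Fin (N+1))) (i : Fin N) :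
    asc ρ i.succ = asc ρ i.castSucc + if ρ i.castSucc < ρ i.succ then 1 else 0 := by
  unfold asc
  split_ifs with h
  · rw [← Finset.card_insert_of_notMem (a := i) (by simp)]
    congr 1
    ext j
    simp only [Finset.mem_filter, Finset.mem_univ, true_and, Finset.mem_insert]
    have : j.castSucc < i.succ ↔ j = i ∨ j.castSucc < i.castSucc := by
      simp only [Fin.lt_def, Fin.ext_iff, Fin.val_castSucc, Fin.val_succ]; omega
    rw [this]
    constructor
    · rintro ⟨rfl | h1, h2⟩
      · exact Or.inl rfl
      · exact Or.inr ⟨h1, h2⟩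
    · rintro (rfl | ⟨h1, h2⟩)
      · exact ⟨Or.inl rfl, h⟩
      · exact ⟨Or.inr h1, h2⟩
  · refine Eq.trans ?_ (Nat.add_zero _).symm
    congr 1
    ext j
    simp only [Finset.mem_filter, Finset.mem_univ, true_and]
    have : j.castSucc < i.succ ↔ j = i ∨ j.castSucc < i.castSucc := by
      simp only [Fin.lt_def, Fin.ext_iff, Fin.val_castSucc, Fin.val_succ]; omega
    rw [this]
    constructor
    · rintro ⟨rfl | h1, h2⟩
      · exact absurd h2 h
      · exact ⟨h1, h2⟩
    · rintro ⟨h1, h2⟩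
      exact ⟨Or.inr h1, h2⟩

theorem des_eq_s10 {N : ℕ} (ρ : Equiv.Perm (Fin (N+1))) :
    des ρ = (Finset.univ.filter (fun j : Fin N => ¬ ρ j.castSucc < ρ j.succ)).card := by
  unfold des
  symm
  apply Finset.card_bij (fun j _ => (j.castSucc, j.succ))
  · intro j hj
    simp only [Finset.mem_filter, Finset.mem_univ, true_and, not_lt] at hj ⊢
    refine ⟨by simp, lt_of_le_of_ne hj ?_⟩
    intro h
    have := ρ.injective h
    simp [Fin.ext_iff] at this
  · intro i _ j _ h
    simpa using h
  · rintro ⟨p, q⟩ h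
    simp only [Finset.mem_filter, Finset.mem_univ, true_and] at h
    obtain ⟨h1, h2⟩ := h
    have hp : (p : ℕ) < N := by have := q.2; omega
    have e1 : (⟨p, hp⟩ : Fin N).castSucc = p := by ext; simp
    have e2 : (⟨p, hp⟩ : Fin N).succ = q := by ext; simp [h1]
    refine ⟨⟨p, hp⟩, ?_, ?_⟩
    · simp only [Finset.mem_filter, Finset.mem_univ, true_and, e1, e2]
      exact not_lt.2 h2.le
    · rw [e1, e2]

theorem asc_add_des {N : ℕ} (ρ : Equiv.Perm (Fin (N+1))) :
    asc ρ (Fin.last N) + des ρ = N := by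
  rw [des_eq_s10]
  unfold asc
  simp only [Fin.castSucc_lt_last, true_and]
  rw [Finset.card_filter_add_card_filter_not]
  simp

theorem sort_iff {N a : ℕ} (ρ : Equiv.Perm (Fin (N+1))) (g : Fin (N+1) → Fin a) :
    Tuple.sort g = ρ ↔ ∀ i : Fin N, g (ρ i.castSucc) < g (ρ i.succ) ∨
      (g (ρ i.castSucc) = g (ρ i.succ) ∧ ρ i.castSucc < ρ i.succ) := by
  rw [eq_comm, Tuple.eq_sort_iff', Fin.strictMono_iff_lt_succ]
  apply forall_congr'
  intro i
  exact Prod.Lex.toLex_lt_toLex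

def countEquiv {N a : ℕ} (ρ : Equiv.Perm (Fin (N+1))) :
    {g : Fin (N+1) → Fin a // Tuple.sort g = ρ} ≃ (Fin (N+1) ↪o Fin (a + asc ρ (Fin.last N))) where
  toFun g := OrderEmbedding.ofStrictMono
    (fun i => ⟨(g.1 (ρ i) : ℕ) + asc ρ i, by
      have := (g.1 (ρ i)).2
      have := asc_mono ρ (Fin.le_last i)
      omega⟩) (by
      rw [Fin.strictMono_iff_lt_succ]
      intro i
      have := (sort_iff ρ g.1).1 g.2 i
      simp only [Fin.lt_def, Fin.ext_iff, asc_succ] at this ⊢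
      split_ifs <;> omega)
  invFun e := 
    have h0 : ∀ i, asc ρ i ≤ (e i : ℕ) := by
      intro i
      induction i using Fin.induction with
      | zero => simp [asc]
      | succ i ih =>
        have := e.strictMono (Fin.castSucc_lt_succ (i := i))
        rw [asc_succ]
        rw [Fin.lt_def] at this
        split_ifs <;> omega
    have hm : Monotone (fun i => (e i : ℕ) - asc ρ i) := by
      rw [Fin.monotone_iff_le_succ]
      intro i
      have := e.strictMono (Fin.castSucc_lt_succ (i := i))
      simp only [asc_succ]
      rw [Fin.lt_def] at this
      split_ifs <;> omega
    have hl : ∀ i, (e i : ℕ) - asc ρ i < a := by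
      intro i
      refine lt_of_le_of_lt (hm (Fin.le_last i)) ?_
      have := (e (Fin.last N)).2
      have := h0 (Fin.last N)
      simp only
      omega
    ⟨fun x => ⟨(e (ρ.symm x) : ℕ) - asc ρ (ρ.symm x), hl _⟩, by
      rw [sort_iff]
      intro i
      have h1 := e.strictMono (Fin.castSucc_lt_succ (i := i))
      have h2 := h0 i.castSucc
      have h3 := h0 i.succ
      have h4 := hm (Fin.castSucc_lt_succ (i := i)).le
      rw [Fin.lt_def] at h1
      simp only [Equiv.symm_apply_apply, Fin.mk_lt_mk, Fin.mk.injEq] at h4 ⊢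
      rw [asc_succ] at *
      split_ifs at * with h
      · omega
      · omega⟩
  left_inv g := by
    apply Subtype.ext
    funext x
    simp
  right_inv e := by
    have h0 : ∀ i, asc ρ i ≤ (e i : ℕ) := by
      intro i
      induction i using Fin.induction with
      | zero => simp [asc]
      | succ i ih =>
        have := e.strictMono (Fin.castSucc_lt_succ (i := i))
        rw [asc_succ]
        rw [Fin.lt_def] at this
        split_ifs <;> omega
    ext i
    simp [h0 i]

theorem count_s10 {N a : ℕ} (ρ : Equiv.Perm (Fin (N+1))) :
    (Finset.univ.filter (fun g : Fin (N+1) → Fin a => Tuple.sort g = ρ)).card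
      = (N + 1 + a - 1 - des ρ).choose (N + 1) := by
  rw [← Fintype.card_subtype, ← Nat.card_eq_fintype_card, Nat.card_congr (countEquiv ρ),
    Nat.card_congr Set.powersetCard.ofFinEmbEquiv, Set.powersetCard.card]
  have := asc_add_des ρ
  rw [Nat.card_eq_fintype_card, Fintype.card_fin]
  congr 1
  omega

theorem Rsh_eq (N a : ℕ) : R (N+1) a =
    ∑ g : Fin (N+1) → Fin a, MonoidAlgebra.of ℚ (Equiv.Perm (Fin (N+1))) (Tuple.sort g) := by
  unfold R
  rw [← Finset.sum_fiberwise_of_maps_to (s := Finset.univ) (t := Finset.univ)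
    (g := fun g : Fin (N+1) → Fin a => Tuple.sort g) (by simp)]
  apply Finset.sum_congr rfl
  intro ρ _
  rw [← count_s10]
  rw [Finset.sum_congr rfl (g := fun _ => MonoidAlgebra.of ℚ (Equiv.Perm (Fin (N+1))) ρ)]
  · rw [Finset.sum_const, Nat.cast_smul_eq_nsmul]
  · intro g hg
    rw [(Finset.mem_filter.1 hg).2]

theorem fpf_lt {a b : ℕ} (x y : Fin b × Fin a) :
    finProdFinEquiv x < finProdFinEquiv y ↔ x.1 < y.1 ∨ (x.1 = y.1 ∧ x.2 < y.2) := by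
  obtain ⟨x1, x2⟩ := x
  obtain ⟨y1, y2⟩ := y
  simp only [finProdFinEquiv_apply_val, Fin.lt_def, Fin.ext_iff]
  have := x2.2
  have := y2.2
  rcases lt_trichotomy (x1 : ℕ) y1 with h | h | h
  · have : a * (x1 + 1) ≤ a * y1 := Nat.mul_le_mul_left a h
    rw [mul_add] at this
    simp only [h, true_or, iff_true]
    omega
  · simp [h]
  · have : a * (y1 + 1) ≤ a * x1 := Nat.mul_le_mul_left a h
    rw [mul_add] at this
    omega

theorem sort_mul {N a b : ℕ} (g : Fin (N+1) → Fin a) (h : Fin (N+1) → Fin b) :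
    Tuple.sort (fun x => finProdFinEquiv (h ((Tuple.sort g).symm x), g x))
      = Tuple.sort g * Tuple.sort h := by
  rw [sort_iff]
  intro i
  simp only [fpf_lt, finProdFinEquiv.injective.eq_iff, Prod.mk.injEq, Equiv.Perm.mul_apply,
    Equiv.symm_apply_apply]
  have h1 := (sort_iff _ h).1 rfl i
  have h2 := Tuple.eq_sort_iff.1 (rfl : Tuple.sort g = Tuple.sort g)
  rcases h1 with h1 | ⟨h1, h3⟩
  · exact Or.inl (Or.inl h1)
  · have h4 := h2.1 h3.le
    have h5 := h2.2 _ _ h3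
    rcases lt_or_eq_of_le h4 with h4 | h4
    · exact Or.inl (Or.inr ⟨h1, h4⟩)
    · exact Or.inr ⟨⟨h1, h4⟩, h5 h4⟩

theorem Rsh_mul (N a b : ℕ) : R (N+1) a * R (N+1) b = R (N+1) (b * a) := by
  rw [Rsh_eq, Rsh_eq, Rsh_eq, Finset.sum_mul_sum, ← Finset.sum_product']
  refine Finset.sum_bij' 
    (fun p _ => fun x => finProdFinEquiv (p.2 ((Tuple.sort p.1).symm x), p.1 x))
    (fun k _ => (fun x => (finProdFinEquiv.symm (k x)).2,
      fun y => (finProdFinEquiv.symm (k 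
        (Tuple.sort (fun x => (finProdFinEquiv.symm (k x)).2) y))).1)) ?_ ?_ ?_ ?_ ?_
  · simp
  · simp
  · rintro ⟨g, h⟩ _
    simp only [Equiv.symm_apply_apply]
  · intro k _
    funext x
    simp only [Equiv.apply_symm_apply, Prod.mk.eta]
  · rintro ⟨g, h⟩ _
    rw [sort_mul, map_mul]

theorem Rsh_one (N : ℕ) : R (N+1) 1 = 1 := by
  rw [Rsh_eq, Fintype.sum_unique]
  have : Tuple.sort (default : Fin (N+1) → Fin 1) = 1 := by
    rw [sort_iff]
    intro i
    right
    exact ⟨Subsingleton.elim _ _, by simp⟩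
  rw [this, map_one]

theorem Rsh_pow (N a j : ℕ) : R (N+1) a ^ j = R (N+1) (a ^ j) := by
  induction j with
  | zero => simp [Rsh_one]
  | succ j ih => rw [pow_succ', ih, Rsh_mul, pow_succ]

open Polynomial in
theorem exists_poly (N d : ℕ) (hd : d ≤ N) : ∃ P : ℚ[X], P.natDegree ≤ N + 1 ∧ P.coeff 0 = 0 ∧
    ∀ a : ℕ, (((N + 1 + a - 1 - d).choose (N + 1) : ℕ) : ℚ) = P.eval (a : ℚ) := by
  refine ⟨C (((N+1).factorial : ℚ)⁻¹) * (descPochhammer ℚ (N+1)).comp (X + C ((N - d : ℕ) : ℚ)),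
    ?_, ?_, ?_⟩
  · refine (natDegree_C_mul_le _ _).trans ?_
    rw [natDegree_comp, descPochhammer_natDegree, natDegree_X_add_C, mul_one]
  · rw [coeff_zero_eq_eval_zero]
    simp only [eval_mul, eval_C, eval_comp, eval_add, eval_X, zero_add]
    rw [descPochhammer_eval_eq_descFactorial, Nat.descFactorial_of_lt (by omega)]
    simp
  · intro a
    simp only [eval_mul, eval_C, eval_comp, eval_add, eval_X]
    rw [← Nat.cast_add, descPochhammer_eval_eq_descFactorial,
      Nat.descFactorial_eq_factorial_mul_choose]
    have : N + 1 + a - 1 - d = a + (N - d) := by omega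
    rw [this, Nat.cast_mul, ← mul_assoc, inv_mul_cancel₀, one_mul]
    exact_mod_cast Nat.factorial_ne_zero _

open Polynomial in
theorem key_s10 (N a : ℕ) (Q : ℚ[X]) (hQ : ∀ k, 1 ≤ k → k ≤ N + 1 → Q.eval ((a : ℚ) ^ k) = 0) :
    aeval (R (N+1) a) Q = 0 := by
  rw [aeval_eq_sum_range]
  simp only [Rsh_pow]
  unfold R
  simp only [Finset.smul_sum]
  rw [Finset.sum_comm]
  apply Finset.sum_eq_zero
  intro ρ _
  simp only [smul_smul]
  rw [← Finset.sum_smul]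
  obtain ⟨P, hP, hP0, hPe⟩ := exists_poly N (des ρ) (by have := asc_add_des ρ; omega)
  simp only [hPe]
  convert zero_smul ℚ _
  simp only [P.eval_eq_sum_range' (Nat.lt_succ_of_le hP), Finset.mul_sum]
  rw [Finset.sum_comm]
  apply Finset.sum_eq_zero
  intro k hk
  rcases Nat.eq_zero_or_pos k with rfl | h
  · simp [hP0]
  · have := hQ k h (by have := Finset.mem_range.1 hk; omega)
    rw [eval_eq_sum_range] at this
    calc _ = P.coeff k * ∑ i ∈ Finset.range (Q.natDegree + 1), Q.coeff i * ((a:ℚ) ^ k) ^ i := by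
          rw [Finset.mul_sum]
          apply Finset.sum_congr rfl
          intro j _
          push_cast
          ring
      _ = 0 := by rw [this, mul_zero]

/-- For every `a ≥ 1`, `(R_a − a)·(R_a − a²)···(R_a − a^n) = 0` in `ℚ[S_n]`,
integers denoting scalar multiples of the identity of the group algebra. -/
theorem stmt_10 (n : ℕ) (hn : 1 ≤ n) (a : ℕ) (ha : 1 ≤ a) :
    ((List.range n).map
      (fun i => R n a - ((a ^ (i + 1) : ℕ) : MonoidAlgebra ℚ (Equiv.Perm (Fin n))))).prod
      = 0 := by
  obtain ⟨N, rfl⟩ : ∃ N, n = N + 1 := ⟨n - 1, by omega⟩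
  have := key_s10 N a ((List.range (N+1)).map
    (fun i => (Polynomial.X - Polynomial.C ((a : ℚ) ^ (i + 1))))).prod (by
      intro k h1 h2
      rw [Polynomial.eval_list_prod]
      apply List.prod_eq_zero
      simp only [List.map_map, List.mem_map, List.mem_range]
      exact ⟨k - 1, by omega, by simp [Nat.sub_add_cancel h1]⟩)
  rw [map_list_prod, List.map_map] at this
  rw [← this]
  congr 2
  funext i
  simp
end

section
/- Let H_n be the hyperoctahedral group of signed permutations, realized as the group of permutations π of {1,…,n} × {+1,−1} satisfying π(i,−s) = −π(i,s) (where −(p,t) := (p,−t)), and let H_n^+ ≤ H_n be the subgroup of even signed permutations (those flipping an even number of signs). For each p ∈ {1,…,n} and ε ∈ {+1,−1} let ρ_{p,ε} ∈ H_n^+ be the element whose underlying permutation of positions sends p to 1, sends i to i+1 for i < p, and fixes i for i > p, and whose sign changes are: none if ε = +1, and flips exactly at the two points mapped to positions 1 and n if ε = −1. Set F_1 := Σ_{p=1}^{n} Σ_{ε ∈ {+1,−1}} ρ_{p,ε} ∈ ℚ[H_n^+]. Then for n ≥ 2 one has F_1·(F_1 − 2)·(F_1 − 4)···(F_1 − (2n−4))·(F_1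 − 2n) = 0 in ℚ[H_n^+], i.e. the product of the factors (F_1 − 2m) over m ∈ {0,1,…,n−2,n} vanishes (the factor (F_1 − (2n−2)) is absent). -/
namespace SideD

def f {n : ℕ} (ε : ℤˣ) (i : Fin n) : ℤˣ := if (i : ℕ) = 0 ∨ (i : ℕ) = n - 1 then ε else 1

lemma usq (a b : ℤˣ) : a * (a * b) = b := by
  rw [← mul_assoc, Int.units_mul_self, one_mul]

/-- the signed decks whose part from position `k` on is sorted -/
def A {n : ℕ} (k : ℕ) (g : Equiv.Perm (Fin n × ℤˣ)) : Prop :=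
  (∀ i s, g⁻¹ (i, s) = ((g⁻¹ (i, 1)).1, s * (g⁻¹ (i, 1)).2)) ∧
  Equiv.Perm.sign g = 1 ∧
  (∀ i : Fin n, k ≤ (i : ℕ) → (i : ℕ) < n - 1 → (g⁻¹ (i, 1)).2 = 1) ∧
  (∀ i j : Fin n, k ≤ (i : ℕ) → i < j → (g⁻¹ (i, 1)).1 < (g⁻¹ (j, 1)).1)

def sg {n : ℕ} (p i : Fin n) : Fin n :=
  if (i : ℕ) = 0 then p else if (i : ℕ) ≤ p then ⟨i - 1, by omega⟩ else i

def ta {n : ℕ} (p i : Fin n) : Fin n :=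
  if h : (i : ℕ) < p then ⟨i + 1, by omega⟩ else if i = p then ⟨0, p.pos⟩ else i

lemma ta_sg {n : ℕ} (p i : Fin n) : ta p (sg p i) = i := by
  simp only [ta, sg, Fin.ext_iff]; split_ifs <;> simp_all [Fin.ext_iff] <;> omega

lemma sg_ta {n : ℕ} (p i : Fin n) : sg p (ta p i) = i := by
  simp only [ta, sg, Fin.ext_iff]; split_ifs <;> simp_all [Fin.ext_iff] <;> omega

structure R {n : ℕ} (ρ : Fin n → ℤˣ → Equiv.Perm (Fin n × ℤˣ)) : Prop where
  hn : 2 ≤ n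
  h : ∀ p ε x s, ρ p ε (x, s) = (ta p x, f ε (ta p x) * s)

variable {n : ℕ} {ρ : Fin n → ℤˣ → Equiv.Perm (Fin n × ℤˣ)}

lemma R.inv (H : R ρ) (p : Fin n) (ε : ℤˣ) (i : Fin n) (s : ℤˣ) :
    (ρ p ε)⁻¹ (i, s) = (sg p i, f ε i * s) := by
  rw [Equiv.Perm.inv_eq_iff_eq, H.h, ta_sg, usq]

lemma sign_one (p : Fin n) (r : Equiv.Perm (Fin n × ℤˣ))
    (h : ∀ x s, r (x, s) = (ta p x, s)) : Equiv.Perm.sign r = 1 := by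
  let t : Equiv.Perm (Fin n) := ⟨ta p, sg p, sg_ta p, ta_sg p⟩
  have : r = Equiv.prodCongrLeft (fun _ : ℤˣ => t) := by
    ext ⟨x, s⟩ <;> simp [h, t]
  rw [this, Equiv.Perm.sign_prodCongrLeft]
  simp [Int.units_sq]

lemma R.sign (H : R ρ) (p : Fin n) (ε : ℤˣ) : Equiv.Perm.sign (ρ p ε) = 1 := by
  have hn := H.hn
  have h1 : Equiv.Perm.sign (ρ p 1) = 1 := by
    apply sign_one p
    intro x s
    rw [H.h]
    simp [f]
  rcases Int.units_eq_one_or ε with rfl | rfl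
  · exact h1
  have h2 : ρ p (-1) = Equiv.swap ((⟨0, by omega⟩ : Fin n), (1 : ℤˣ)) (⟨0, by omega⟩, -1) *
      Equiv.swap ((⟨n - 1, by omega⟩ : Fin n), (1 : ℤˣ)) (⟨n - 1, by omega⟩, -1) * ρ p 1 := by
    refine Equiv.ext ?_
    rintro ⟨x, s⟩
    simp only [Equiv.Perm.mul_apply, H.h]
    generalize ta p x = y
    have hne : (1 : ℤˣ) ≠ -1 := by decide
    have hn1 : n - 1 ≠ 0 := by omega
    rcases Int.units_eq_one_or s with rfl | rfl <;>
    · simp only [f, Equiv.swap_apply_def, Fin.ext_iff, Prod.ext_iff]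
      by_cases h0 : (y : ℕ) = 0
      · simp [h0, hne, hne.symm, hn1, hn1.symm]
      · by_cases h0' : (y : ℕ) = n - 1
        · simp [h0', hne, hne.symm, hn1, hn1.symm]
        · simp [h0, h0', hne, hne.symm, hn1, hn1.symm]
  have hne : (1 : ℤˣ) ≠ -1 := by decide
  rw [h2, map_mul, map_mul, h1, Equiv.Perm.sign_swap (by simp [hne]),
    Equiv.Perm.sign_swap (by simp [hne])]
  simp

lemma R.C (H : R ρ) (p : Fin n) (ε : ℤˣ) {g : Equiv.Perm (Fin n × ℤˣ)}
    (hg : ∀ i s, g⁻¹ (i, s) = ((g⁻¹ (i, 1)).1, s * (g⁻¹ (i, 1)).2)) (i : Fin n) (s : ℤˣ) :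
    (ρ p ε * g)⁻¹ (i, s) = ((g⁻¹ (sg p i, 1)).1, s * (f ε i * (g⁻¹ (sg p i, 1)).2)) := by
  rw [mul_inv_rev, Equiv.Perm.mul_apply, H.inv, hg]
  congr 1
  rw [mul_comm (f ε i) s, mul_assoc]

lemma f_mid {ε : ℤˣ} {i : Fin n} (h : (i : ℕ) ≠ 0) (h' : (i : ℕ) ≠ n - 1) : f ε i = 1 := by
  simp [f, h, h']

lemma R.base (H : R ρ) (p : Fin n) (ε : ℤˣ) {g : Equiv.Perm (Fin n × ℤˣ)} {k : ℕ} (hg : A k g) :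
    (∀ i s, (ρ p ε * g)⁻¹ (i, s) =
      (((ρ p ε * g)⁻¹ (i, 1)).1, s * ((ρ p ε * g)⁻¹ (i, 1)).2)) ∧
    Equiv.Perm.sign (ρ p ε * g) = 1 := by
  refine ⟨fun i s => ?_, ?_⟩
  · simp only [H.C p ε hg.1, one_mul]
  · rw [map_mul, H.sign, hg.2.1, one_mul]

lemma R.stable (H : R ρ) (p : Fin n) (ε : ℤˣ) {g : Equiv.Perm (Fin n × ℤˣ)} {k : ℕ} (hk : k ≤ n - 1)
    (hp : (p : ℕ) < k ∨ k = n - 1) (hg : A k g) : A k (ρ p ε * g) := by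
  have hn := H.hn
  refine ⟨(H.base p ε hg).1, (H.base p ε hg).2, fun i h1 h2 => ?_, fun i j h1 h2 => ?_⟩
  · simp only [H.C p ε hg.1, one_mul]
    rw [f_mid (by omega) (by omega), one_mul]
    have : sg p i = i := by simp only [sg]; rw [if_neg (by omega), if_neg (by omega)]
    rw [this]
    exact hg.2.2.1 i h1 h2
  · have h2' : (i : ℕ) < j := h2
    simp only [H.C p ε hg.1]
    have hi : sg p i = i := by simp only [sg]; rw [if_neg (by omega), if_neg (by omega)]
    have hj : sg p j = j := by simp only [sg]; rw [if_neg (by omega), if_neg (by omega)]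
    rw [hi, hj]
    exact hg.2.2.2 i j h1 h2

lemma R.up (H : R ρ) (p : Fin n) (ε : ℤˣ) {g : Equiv.Perm (Fin n × ℤˣ)} {k : ℕ}
    (hp : k ≤ (p : ℕ)) (hg : A k g) : A (k + 1) (ρ p ε * g) := by
  have hn := H.hn
  refine ⟨(H.base p ε hg).1, (H.base p ε hg).2, fun i h1 h2 => ?_, fun i j h1 h2 => ?_⟩
  · simp only [H.C p ε hg.1, one_mul]
    rw [f_mid (by omega) (by omega), one_mul]
    apply hg.2.2.1
    · simp only [sg]; split_ifs <;> (try simp only) <;> omega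
    · simp only [sg]; split_ifs <;> (try simp only) <;> omega
  · have h2' : (i : ℕ) < j := h2
    simp only [H.C p ε hg.1]
    apply hg.2.2.2
    · simp only [sg]; split_ifs <;> (try simp only) <;> omega
    · simp only [sg, Fin.lt_def]; split_ifs <;> (try simp only) <;> omega

/-- inverse formula -/
lemma R.D (H : R ρ) (p : Fin n) (ε : ℤˣ) {h : Equiv.Perm (Fin n × ℤˣ)}
    (hh : ∀ i s, h⁻¹ (i, s) = ((h⁻¹ (i, 1)).1, s * (h⁻¹ (i, 1)).2)) (i : Fin n) (s : ℤˣ) :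
    ((ρ p ε)⁻¹ * h)⁻¹ (i, s) =
      ((h⁻¹ (ta p i, 1)).1, s * (f ε (ta p i) * (h⁻¹ (ta p i, 1)).2)) := by
  rw [mul_inv_rev, inv_inv, Equiv.Perm.mul_apply, H.h, hh]
  congr 1
  rw [mul_comm (f ε _) s, mul_assoc]

lemma R.p_inj (H : R ρ) {p p' : Fin n} {ε ε' : ℤˣ} {g g' : Equiv.Perm (Fin n × ℤˣ)} {k : ℕ}
    (hp : k ≤ (p : ℕ)) (hg : A k g) (hg' : A k g')
    (e : ρ p ε * g = ρ p' ε' * g') : ¬ p < p' := by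
  intro hlt
  have hlt' : (p : ℕ) < p' := hlt
  have hn := H.hn
  have key : ∀ i, (g⁻¹ (sg p i, 1)).1 = (g'⁻¹ (sg p' i, 1)).1 := by
    intro i
    have := H.C p ε hg.1 i 1
    rw [e, H.C p' ε' hg'.1 i 1] at this
    exact (Prod.ext_iff.1 this).1.symm
  have a0 := key ⟨0, by omega⟩
  have a1 := key p'
  have e1 : sg p p' = p' := by simp only [sg]; rw [if_neg (by omega), if_neg (by omega)]
  have e2 : sg p' p' = ⟨p' - 1, by omega⟩ := by
    simp only [sg]; rw [if_neg (by omega), if_pos le_rfl]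
  simp only [e1, e2] at a1
  simp only [sg, if_true] at a0
  have b := hg.2.2.2 p p' hp hlt
  have b' := hg'.2.2.2 ⟨p' - 1, by omega⟩ p' (by simp; omega) (by simp [Fin.lt_def]; omega)
  rw [a0, a1] at b
  exact lt_asymm b b'

lemma R.inj (H : R ρ) {p p' : Fin n} {ε ε' : ℤˣ} {g g' : Equiv.Perm (Fin n × ℤˣ)} {k : ℕ}
    (hk : k + 2 ≤ n)
    (hp : k ≤ (p : ℕ)) (hp' : k ≤ (p' : ℕ)) (hg : A k g) (hg' : A k g')
    (e : ρ p ε * g = ρ p' ε' * g') : p = p' ∧ ε = ε' ∧ g = g' := by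
  have hn := H.hn
  have hpp : p = p' := le_antisymm (not_lt.1 (H.p_inj hp' hg' hg e.symm))
    (not_lt.1 (H.p_inj hp hg hg' e))
  subst hpp
  have key : ∀ i, f ε i * (g⁻¹ (sg p i, 1)).2 = f ε' i * (g'⁻¹ (sg p i, 1)).2 := by
    intro i
    have := H.C p ε hg.1 i 1
    rw [e, H.C p ε' hg'.1 i 1] at this
    simpa using (Prod.ext_iff.1 this).2.symm
  have he : ε = ε' := by
    by_cases hl : (p : ℕ) < n - 1
    · have := key ⟨0, by omega⟩
      simp only [sg, if_true] at this
      rw [hg.2.2.1 p hp hl, hg'.2.2.1 p hp hl] at this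
      simpa [f] using this
    · have := key ⟨n - 1, by omega⟩
      have e2 : sg p ⟨n - 1, by omega⟩ = ⟨n - 2, by omega⟩ := by
        simp only [sg]; rw [if_neg (by omega), if_pos (by omega)]; simp [Fin.ext_iff]; omega
      rw [e2, hg.2.2.1 _ (by simp; omega) (by simp; omega),
        hg'.2.2.1 _ (by simp; omega) (by simp; omega)] at this
      simpa [f] using this
  subst he
  exact ⟨rfl, rfl, mul_left_cancel e⟩

lemma exists_p {k : ℕ} (hk : k + 2 ≤ n) (c : Fin n → Fin n)
    (hc : ∀ i j : Fin n, k + 1 ≤ (i : ℕ) → i < j → c i < c j) (z : Fin n) :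
    ∃ p : Fin n, k ≤ (p : ℕ) ∧ ∀ j : Fin n, k < (j : ℕ) →
      (((j : ℕ) ≤ p → c j < z) ∧ ((p : ℕ) < j → ¬ c j < z)) := by
  classical
  let P : ℕ → Prop := fun j => j = k ∨ (k < j ∧ ∃ h : j < n, c ⟨j, h⟩ < z)
  let m := Nat.findGreatest P (n - 1)
  have hkm : k ≤ m := Nat.le_findGreatest (P := P) (by omega) (Or.inl rfl)
  have hm : P m := Nat.findGreatest_spec (P := P) (m := k) (by omega) (Or.inl rfl)
  have hmn : m ≤ n - 1 := Nat.findGreatest_le _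
  refine ⟨⟨m, by omega⟩, hkm, fun j hj => ⟨fun hjm => ?_, fun hjm hlt => ?_⟩⟩
  · simp only at hjm
    rcases hm with hm | ⟨_, h, hm⟩
    · omega
    · rcases hjm.lt_or_eq with hl | hl
      · exact (hc j ⟨m, h⟩ hj hl).trans hm
      · have : j = ⟨m, h⟩ := Fin.ext hl
        rw [this]; exact hm
  · have := Nat.le_findGreatest (P := P) (m := (j : ℕ)) (n := n - 1) (by omega)
      (Or.inr ⟨hj, j.2, hlt⟩)
    simp only at hjm
    omega

lemma R.surj (H : R ρ) {h : Equiv.Perm (Fin n × ℤˣ)} {k : ℕ}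
    (hk : k + 2 ≤ n) (hh : A (k + 1) h) :
    ∃ (p : Fin n) (ε : ℤˣ) (g : Equiv.Perm (Fin n × ℤˣ)), k ≤ (p : ℕ) ∧ A k g ∧
      ρ p ε * g = h := by
  have hn := H.hn
  obtain ⟨p, hp, hP⟩ := exists_p hk (fun i => (h⁻¹ (i, 1)).1) hh.2.2.2
    (h⁻¹ (⟨0, by omega⟩, 1)).1
  have hinj : ∀ i j : Fin n, i ≠ j → (h⁻¹ (i, 1)).1 ≠ (h⁻¹ (j, 1)).1 := by
    intro i j hij e
    have h1 := hh.1 i ((h⁻¹ (i, 1)).2)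
    have h2 := hh.1 j ((h⁻¹ (j, 1)).2)
    rw [Int.units_mul_self, e] at h1
    rw [Int.units_mul_self, ← h1] at h2
    have := h⁻¹.injective h2
    exact hij (Prod.ext_iff.1 this).1.symm
  let ε : ℤˣ := if (p : ℕ) < n - 1 then (h⁻¹ (⟨0, by omega⟩, 1)).2
    else (h⁻¹ (⟨n - 1, by omega⟩, 1)).2
  refine ⟨p, ε, (ρ p ε)⁻¹ * h, hp, ⟨fun i s => ?_, ?_, fun i h1 h2 => ?_, fun i j h1 h2 => ?_⟩,
    mul_inv_cancel_left _ _⟩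
  · simp only [H.D p ε hh.1, one_mul]
  · rw [map_mul, map_inv, H.sign, hh.2.1]; simp
  · simp only [H.D p ε hh.1, one_mul]
    rcases lt_trichotomy (i : ℕ) p with hl | hl | hl
    · have e1 : ta p i = ⟨i + 1, by omega⟩ := by simp only [ta]; rw [dif_pos hl]
      rw [e1]
      by_cases hi : (i : ℕ) + 1 = n - 1
      · have hpn : ¬ (p : ℕ) < n - 1 := by omega
        have e3 : (⟨i + 1, by omega⟩ : Fin n) = ⟨n - 1, by omega⟩ := Fin.ext hi
        rw [e3]
        simp [f, ε, hpn, Int.units_mul_self]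
      · rw [f_mid (by simp) (by simpa using hi), one_mul]
        exact hh.2.2.1 _ (by simp; omega) (by simp; omega)
    · have e1 : ta p i = ⟨0, by omega⟩ := by
        simp only [ta]; rw [dif_neg (by omega), if_pos (Fin.ext hl)]
      have hpn : (p : ℕ) < n - 1 := by omega
      rw [e1]
      simp [f, ε, hpn, Int.units_mul_self]
    · have e1 : ta p i = i := by
        simp only [ta]; rw [dif_neg (by omega), if_neg (by simp [Fin.ext_iff]; omega)]
      rw [e1, f_mid (by omega) (by omega), one_mul]
      exact hh.2.2.1 _ (by omega) (by omega)
  · have h2' : (i : ℕ) < j := h2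
    simp only [H.D p ε hh.1]
    have tl : ∀ (i : Fin n) (hl : (i : ℕ) < p), ta p i = ⟨i + 1, by omega⟩ := by
      intro i hl; simp only [ta]; rw [dif_pos hl]
    have te : ∀ (i : Fin n) (hl : (i : ℕ) = p), ta p i = ⟨0, by omega⟩ := by
      intro i hl; simp only [ta]; rw [dif_neg (by omega), if_pos (Fin.ext hl)]
    have tg : ∀ (i : Fin n) (hl : (p : ℕ) < i), ta p i = i := by
      intro i hl; simp only [ta]; rw [dif_neg (by omega), if_neg (by simp [Fin.ext_iff]; omega)]
    rcases lt_trichotomy (i : ℕ) p with hi | hi | hi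
    · rw [tl i hi]
      rcases lt_trichotomy (j : ℕ) p with hj | hj | hj
      · rw [tl j hj]
        exact hh.2.2.2 _ _ (by simp; omega) (Fin.lt_def.2 (by simp only; omega))
      · rw [te j hj]
        exact (hP ⟨i + 1, by omega⟩ (by simp; omega)).1 (by simp; omega)
      · rw [tg j hj]
        exact hh.2.2.2 _ _ (by simp; omega) (Fin.lt_def.2 (by simp only; omega))
    · rw [te i hi, tg j (by omega)]
      refine lt_of_le_of_ne (not_lt.1 ((hP j (by omega)).2 (by omega))) (hinj _ _ ?_)
      simp [Fin.ext_iff]; omega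
    · rw [tg i hi, tg j (by omega)]
      exact hh.2.2.2 _ _ (by omega) h2

lemma A_zero (hn : 2 ≤ n) (g : Equiv.Perm (Fin n × ℤˣ)) : A 0 g ↔ g = 1 := by
  have hne : (1 : ℤˣ) ≠ -1 := by decide
  constructor
  · rintro ⟨h1, h2, h3, h4⟩
    have hc : StrictMono (fun i : Fin n => (g⁻¹ (i, 1)).1) := fun i j hij => h4 i j (by omega) hij
    have hid : ∀ i : Fin n, (g⁻¹ (i, 1)).1 = i := by
      intro i
      exact le_antisymm hc.apply_le hc.le_apply
    by_cases hl : (g⁻¹ (⟨n - 1, by omega⟩, 1)).2 = 1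
    · rw [← inv_eq_one]
      refine Equiv.ext ?_
      rintro ⟨i, s⟩
      rw [h1, hid]
      by_cases hi : (i : ℕ) < n - 1
      · rw [h3 i (by omega) hi]; simp
      · have : i = ⟨n - 1, by omega⟩ := Fin.ext (by simp; omega)
        rw [this, hl]; simp
    · exfalso
      have hl' : (g⁻¹ (⟨n - 1, by omega⟩, 1)).2 = -1 := (Int.units_eq_one_or _).resolve_left hl
      have : g⁻¹ = Equiv.swap ((⟨n - 1, by omega⟩ : Fin n), (1 : ℤˣ)) (⟨n - 1, by omega⟩, -1) := by
        refine Equiv.ext ?_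
        rintro ⟨i, s⟩
        rw [h1, hid]
        by_cases hi : (i : ℕ) < n - 1
        · rw [h3 i (by omega) hi, Equiv.swap_apply_of_ne_of_ne]
          · simp
          · simp [Fin.ext_iff]; omega
          · simp [Fin.ext_iff]; omega
        · have : i = ⟨n - 1, by omega⟩ := Fin.ext (by simp; omega)
          rw [this, hl']
          rcases Int.units_eq_one_or s with rfl | rfl <;> simp
      have h5 := Equiv.Perm.sign_inv g
      rw [this, Equiv.Perm.sign_swap (by simp [hne]), h2] at h5
      exact hne h5.symm
  · rintro rfl
    refine ⟨by simp, by simp, by simp, fun i j _ h => by simpa using h⟩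

open Classical in
noncomputable def S (n k : ℕ) : Finset (Equiv.Perm (Fin n × ℤˣ)) := Finset.univ.filter (A k)

noncomputable def F (n k : ℕ) : MonoidAlgebra ℚ (Equiv.Perm (Fin n × ℤˣ)) :=
  ∑ g ∈ S n k, MonoidAlgebra.of ℚ _ g

lemma mem_S {k : ℕ} {g : Equiv.Perm (Fin n × ℤˣ)} : g ∈ S n k ↔ A k g := by simp [S]

lemma R.mulF (H : R ρ) (p : Fin n) (ε : ℤˣ) {k : ℕ} (hk : k ≤ n - 1)
    (hp : (p : ℕ) < k ∨ k = n - 1) : MonoidAlgebra.of ℚ _ (ρ p ε) * F n k = F n k := by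
  have hm : (S n k).map (mulLeftEmbedding (ρ p ε)) = S n k := by
    apply Finset.map_eq_of_subset
    intro x hx
    simp only [Finset.mem_map, mulLeftEmbedding_apply] at hx
    obtain ⟨g, hg, rfl⟩ := hx
    exact mem_S.2 (H.stable p ε hk hp (mem_S.1 hg))
  conv_rhs => rw [F, ← hm, Finset.sum_map]
  simp only [F, Finset.mul_sum, mulLeftEmbedding_apply, map_mul]

lemma R.upF (H : R ρ) {k : ℕ} (hk : k + 2 ≤ n) :
    ∑ p ∈ Finset.univ.filter (fun p : Fin n => ¬ (p : ℕ) < k), ∑ ε : ℤˣ,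
      MonoidAlgebra.of ℚ _ (ρ p ε) * F n k = F n (k + 1) := by
  simp only [F, Finset.mul_sum, ← map_mul]
  simp only [← Finset.sum_product']
  refine Finset.sum_bij (fun x _ => ρ x.1 x.2.1 * x.2.2) ?_ ?_ ?_ ?_
  · rintro ⟨p, ε, g⟩ hx
    simp only [Finset.mem_product, Finset.mem_filter, Finset.mem_univ, true_and, mem_S, not_lt] at hx
    exact mem_S.2 (H.up p ε hx.1 hx.2)
  · rintro ⟨p, ε, g⟩ hx ⟨p', ε', g'⟩ hx' e
    simp only [Finset.mem_product, Finset.mem_filter, Finset.mem_univ, true_and, mem_S, not_lt]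
      at hx hx'
    obtain ⟨rfl, rfl, rfl⟩ := H.inj hk hx.1 hx'.1 hx.2 hx'.2 e
    rfl
  · intro h hh
    obtain ⟨p, ε, g, hp, hg, e⟩ := H.surj hk (mem_S.1 hh)
    exact ⟨(p, ε, g), by simp only [Finset.mem_product, Finset.mem_filter, Finset.mem_univ, true_and, mem_S, not_lt]; exact ⟨hp, hg⟩, e⟩
  · intros; rfl

lemma R.step (H : R ρ) {k : ℕ} (hk : k + 2 ≤ n) :
    ((∑ p : Fin n, ∑ ε : ℤˣ, MonoidAlgebra.of ℚ _ (ρ p ε)) -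
      ((2 * k : ℕ) : MonoidAlgebra ℚ (Equiv.Perm (Fin n × ℤˣ)))) * F n k = F n (k + 1) := by
  rw [sub_mul, sub_eq_iff_eq_add, ← H.upF hk]
  simp only [Finset.sum_mul]
  rw [← Finset.sum_filter_add_sum_filter_not Finset.univ (fun p : Fin n => (p : ℕ) < k), add_comm]
  congr 1
  have : ∀ p ∈ Finset.univ.filter (fun p : Fin n => (p : ℕ) < k),
      (∑ ε : ℤˣ, MonoidAlgebra.of ℚ _ (ρ p ε) * F n k) = (2 : ℕ) • F n k := by
    intro p hp
    simp only [Finset.mem_filter, Finset.mem_univ, true_and] at hp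
    rw [Finset.sum_congr rfl (fun ε _ => H.mulF p ε (by omega) (Or.inl hp))]
    simp
  rw [Finset.sum_congr rfl this, Finset.sum_const, Fin.card_filter_val_lt, smul_smul,
    nsmul_eq_mul, min_eq_right (by omega), mul_comm k 2]

lemma R.last (H : R ρ) :
    ((∑ p : Fin n, ∑ ε : ℤˣ, MonoidAlgebra.of ℚ _ (ρ p ε)) -
      ((2 * n : ℕ) : MonoidAlgebra ℚ (Equiv.Perm (Fin n × ℤˣ)))) * F n (n - 1) = 0 := by
  rw [sub_mul, sub_eq_zero]
  simp only [Finset.sum_mul]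
  rw [Finset.sum_congr rfl (fun p _ => Finset.sum_congr rfl
    (fun ε _ => H.mulF p ε le_rfl (Or.inr rfl)))]
  simp only [Finset.sum_const, Finset.card_univ, Fintype.card_fin, smul_smul, nsmul_eq_mul]
  simp [mul_comm, mul_assoc]

lemma prod_comm {M : Type*} [Ring M] (x : M) (k m : ℕ) :
    Commute ((List.range k).map (fun m => x - ((2 * m : ℕ) : M))).prod (x - ((2 * m : ℕ) : M)) := by
  apply Commute.list_prod_left
  intro y hy
  obtain ⟨a, _, rfl⟩ := List.mem_map.1 hy
  have h1 : Commute x (x - ((2 * m : ℕ) : M)) := (Commute.refl x).sub_right (Nat.cast_commute _ _).symm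
  exact h1.sub_left (Nat.cast_commute _ _)

lemma R.prod (H : R ρ) (k : ℕ) (hk : k ≤ n - 1) :
    ((List.range k).map (fun m => (∑ p : Fin n, ∑ ε : ℤˣ, MonoidAlgebra.of ℚ _ (ρ p ε)) -
      ((2 * m : ℕ) : MonoidAlgebra ℚ (Equiv.Perm (Fin n × ℤˣ))))).prod = F n k := by
  have hn := H.hn
  induction k with
  | zero =>
    have : S n 0 = {1} := by ext g; rw [mem_S, A_zero hn, Finset.mem_singleton]
    simp [F, this, MonoidAlgebra.one_def]
  | succ k ih =>
    rw [List.range_succ, List.map_append, List.prod_append, List.map_singleton,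
      List.prod_singleton, (prod_comm _ k k).eq, ih (by omega), H.step (by omega)]

end SideD

/-- Type `D_n` side shuffle.  Signed permutations are realized inside the permutations
of `Fin n × ℤˣ` (positions `{1,…,n}`, 0-indexed, times signs `{+1,−1}`).  For
`p : Fin n`, `τ p` is the underlying permutation of positions sending `p` to the top
(0-indexed position `0`), `i` to `i+1` for `i < p`, and fixing `i` for `i > p`.  The
element `ρ p ε` acts on `(x, s)` by applying `τ p` to the position and flipping the
sign exactly at the two points mapped to the top and bottom positions (`0` and `n-1`)
when `ε = −1`, and flipping no signs when `ε = +1`; these are even signed permutations,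
i.e. elements of `H_n⁺`.  With `F_1 := Σ_p Σ_ε ρ_{p,ε}` in the group algebra, for
`n ≥ 2` one has `F_1·(F_1 − 2)·(F_1 − 4)···(F_1 − (2n−4))·(F_1 − 2n) = 0`, i.e. the
product of the factors `(F_1 − 2m)` over `m ∈ {0,1,…,n−2,n}` vanishes (the factor
`(F_1 − (2n−2))` is absent; integers denote scalar multiples of the identity; the
identity holds equivalently in `ℚ[H_n⁺]` since `ℚ[H_n⁺]` embeds in the group algebra
used here). -/
theorem stmt_14 (n : ℕ) (hn : 2 ≤ n)
    (τ : Fin n → Fin n → Fin n)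
    (hτeq : ∀ p : Fin n, τ p p = ⟨0, p.pos⟩)
    (hτlt : ∀ (p x : Fin n) (h : (x : ℕ) < (p : ℕ)),
      τ p x = ⟨(x : ℕ) + 1, lt_of_le_of_lt h p.isLt⟩)
    (hτgt : ∀ p x : Fin n, (p : ℕ) < (x : ℕ) → τ p x = x)
    (ρ : Fin n → ℤˣ → Equiv.Perm (Fin n × ℤˣ))
    (hρ : ∀ (p : Fin n) (ε : ℤˣ) (x : Fin n) (s : ℤˣ),
      ρ p ε (x, s) =
        (τ p x,
          if ε = -1 ∧ ((τ p x : ℕ) = 0 ∨ (τ p x : ℕ) = n - 1) then -s else s)) :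
    ((List.range (n - 1)).map
      (fun m => (∑ p : Fin n, ∑ ε : ℤˣ,
          MonoidAlgebra.of ℚ (Equiv.Perm (Fin n × ℤˣ)) (ρ p ε))
        - ((2 * m : ℕ) : MonoidAlgebra ℚ (Equiv.Perm (Fin n × ℤˣ))))).prod *
      ((∑ p : Fin n, ∑ ε : ℤˣ,
          MonoidAlgebra.of ℚ (Equiv.Perm (Fin n × ℤˣ)) (ρ p ε))
        - ((2 * n : ℕ) : MonoidAlgebra ℚ (Equiv.Perm (Fin n × ℤˣ)))) = 0 := by
  have H : SideD.R ρ := by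
    refine ⟨hn, fun p ε x s => ?_⟩
    have ht : τ p x = SideD.ta p x := by
      simp only [SideD.ta]
      split_ifs with h1 h2
      · exact hτlt p x h1
      · rw [h2]; exact hτeq p
      · exact hτgt p x (by have := fun h => h2 (Fin.ext h); omega)
    rw [hρ, ht]
    congr 1
    simp only [SideD.f]
    rcases Int.units_eq_one_or ε with rfl | rfl
    · have hne : (1 : ℤˣ) ≠ -1 := by decide
      simp [hne]
    · split_ifs <;> simp_all
  rw [(SideD.prod_comm _ (n - 1) n).eq, H.prod (n - 1) le_rfl, H.last]
end
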